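/- arXiv:2203.11190 — 2 statements merged into one kernel-verified Lean document; each statement's English description precedes it below -/
import Mathlib

section
/- Let U be a finite set with |U| = m, let α ∈ (0,1], and let ν be a probability distribution on binom(U,k) that is (1/α)-entropically independent, with marginals p_i = P_{S∼ν}[i∈S]. Let β ∈ (0,1), set C = 1 + √β, and let R ⊆ U satisfy: p_i ≤ Ck/m for all i ∈ U and p_i ≥ k/(Cm) for all i ∈ R. Let ε ∈ (0, 1/e], let t be an integer with 1 ≤ t ≤ k/2, and let T ∈ binom(U,t) satisfy ν_t(T) ≥ ε^t, where ν_t = νD_{k→t}. Let γ > 0 satisfy √β ≤ min{1/(3γ), (t/(αk))·log(1/ε)}, and let τ ≥ m^γ·γ(1+γ)·(12t/(αk))·log(1/ε). Then ∑_{i∈R∖T} ν_{t+1|T}(i) · ( k·ν_{t+1|T}(i)/p_i )^γ ≤ exp(τ), where ν_{t+1|T}(i) = P_{S∼ν}[i∈S | T⊆S]/(k−t) for i ∈ U∖T. -/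
open Finset

/-- Convexity comparison between the power function and the entropy function on `[0, M]`. -/
lemma rpow_one_add_le_entropy {M γ y : ℝ} (hM : 1 ≤ M) (hγ : 0 < γ) (hy0 : 0 ≤ y) (hyM : y ≤ M) :
    y ^ (1 + γ) ≤ 1 + (1 + γ) * (y - 1)
      + γ * (1 + γ) * M ^ γ * (y * Real.log y - y + 1) := by
  set g : ℝ → ℝ := fun y => 1 + (1 + γ) * (y - 1)
      + γ * (1 + γ) * M ^ γ * (y * Real.log y - y + 1) - y ^ (1 + γ) with hg
  have hMγ : 1 ≤ M ^ γ := Real.one_le_rpow hM hγ.le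
  have hcont : Continuous g := by
    have h1 : Continuous fun y : ℝ => y * Real.log y := Real.continuous_mul_log
    have h2 : Continuous fun y : ℝ => y ^ (1 + γ) :=
      Real.continuous_rpow_const (by linarith)
    fun_prop
  have hderiv : ∀ x, 0 < x → HasDerivAt g
      ((1 + γ) * (1 + γ * M ^ γ * Real.log x - x ^ γ)) x := by
    intro x hx
    have h1 := Real.hasDerivAt_mul_log hx.ne'
    have h2 : HasDerivAt (fun y : ℝ => y ^ (1 + γ)) ((1 + γ) * x ^ (1 + γ - 1)) x :=
      Real.hasDerivAt_rpow_const (Or.inl hx.ne')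
    have h3 := (((((hasDerivAt_id x).sub_const 1).const_mul (1 + γ)).const_add 1).add
      (((h1.sub (hasDerivAt_id x)).add_const 1).const_mul (γ * (1 + γ) * M ^ γ))).sub h2
    refine (h3.congr_deriv ?_)
    rw [show 1 + γ - 1 = γ by ring]
    ring
  have hg1 : g 1 = 0 := by simp [hg]
  suffices h : 0 ≤ g y by simp only [hg] at h; linarith
  rw [← hg1]
  rcases le_total y 1 with hy | hy
  · have hanti : AntitoneOn g (Set.Icc 0 1) := by
      refine antitoneOn_of_deriv_nonpos (convex_Icc 0 1) hcont.continuousOn ?_ ?_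
      · intro x hx
        rw [interior_Icc] at hx
        exact (hderiv x hx.1).differentiableAt.differentiableWithinAt
      · intro x hx
        rw [interior_Icc] at hx
        rw [(hderiv x hx.1).deriv]
        have hlog : Real.log x ≤ 0 := Real.log_nonpos hx.1.le hx.2.le
        have h1 : Real.log x * γ + 1 ≤ x ^ γ := by
          rw [Real.rpow_def_of_pos hx.1]; exact Real.add_one_le_exp _
        have h2 : γ * M ^ γ * Real.log x ≤ γ * Real.log x := by
          nlinarith [mul_nonneg (mul_nonneg hγ.le (sub_nonneg.2 hMγ)) (neg_nonneg.2 hlog)]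
        exact mul_nonpos_of_nonneg_of_nonpos (by linarith) (by linarith)
    exact hanti ⟨hy0, hy⟩ ⟨zero_le_one, le_rfl⟩ hy
  · have hmono : MonotoneOn g (Set.Icc 1 M) := by
      refine monotoneOn_of_deriv_nonneg (convex_Icc 1 M) hcont.continuousOn ?_ ?_
      · intro x hx
        rw [interior_Icc] at hx
        exact (hderiv x (by linarith [hx.1])).differentiableAt.differentiableWithinAt
      · intro x hx
        rw [interior_Icc] at hx
        have hx0 : 0 < x := by linarith [hx.1]
        rw [(hderiv x hx0).deriv]
        have hlog : 0 ≤ Real.log x := Real.log_nonneg hx.1.le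
        have h1 : x ^ γ * (1 - Real.log x * γ) ≤ 1 := by
          have h := Real.add_one_le_exp (-(Real.log x * γ))
          have hpos := Real.exp_pos (Real.log x * γ)
          rw [Real.rpow_def_of_pos hx0]
          calc _ ≤ Real.exp (Real.log x * γ) * Real.exp (-(Real.log x * γ)) :=
                mul_le_mul_of_nonneg_left (by linarith) hpos.le
            _ = 1 := by rw [← Real.exp_add]; simp
        have h2 : x ^ γ ≤ M ^ γ := Real.rpow_le_rpow hx0.le hx.2.le hγ.le
        have h3 : x ^ γ * (Real.log x * γ) ≤ M ^ γ * (Real.log x * γ) :=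
          mul_le_mul_of_nonneg_right h2 (by positivity)
        exact mul_nonneg (by linarith) (by linarith)
    exact hmono ⟨le_rfl, hM⟩ ⟨hy, hyM⟩ hy

/-- The moments of a distribution `q` supported on `s`, relative to the uniform distribution on an
ambient set with `m` elements, are controlled by its relative entropy. -/
lemma sum_mul_rpow_le_entropy {U : Type*} {s : Finset U} {m : ℕ} {q : U → ℝ} {γ : ℝ}
    (hm : 1 ≤ m) (hs : s.card ≤ m) (hγ : 0 < γ) (hq0 : ∀ i ∈ s, 0 ≤ q i)
    (hq1 : ∑ i ∈ s, q i = 1) :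
    ∑ i ∈ s, q i * (m * q i) ^ γ ≤
      1 + γ * (1 + γ) * (m : ℝ) ^ γ * ∑ i ∈ s, q i * Real.log (m * q i) := by
  have hm1 : (1 : ℝ) ≤ m := by exact_mod_cast hm
  have hm0 : (0 : ℝ) < m := by linarith
  set K := γ * (1 + γ) * (m : ℝ) ^ γ with hK
  have hKγ : γ ≤ K := by
    have h := rpow_one_add_le_entropy hm1 hγ le_rfl hm0.le
    rw [Real.zero_rpow (by linarith)] at h
    simp only [Real.log_zero] at h
    linarith
  have hpt : ∀ i ∈ s, m * (q i * (m * q i) ^ γ) ≤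
      (K - γ) * 1 + (1 + γ - K) * (m * q i) + K * m * (q i * Real.log (m * q i)) := by
    intro i hi
    have hle : q i ≤ 1 := hq1 ▸ single_le_sum hq0 hi
    have hy0 : 0 ≤ m * q i := mul_nonneg hm0.le (hq0 i hi)
    have h := rpow_one_add_le_entropy hm1 hγ hy0 (by nlinarith : m * q i ≤ m)
    rw [Real.rpow_add' hy0 (by linarith), Real.rpow_one] at h
    linarith
  have hsum := sum_le_sum hpt
  simp only [sum_add_distrib, ← mul_sum, hq1, sum_const, nsmul_eq_mul, mul_one] at hsum
  have hcard : (s.card : ℝ) ≤ m := by exact_mod_cast hs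
  have h2 : (K - γ) * s.card ≤ (K - γ) * m := mul_le_mul_of_nonneg_left hcard (by linarith)
  refine le_of_mul_le_mul_left ?_ hm0
  linarith

/-- Double counting: the marginals of a weight supported on `k`-sets sum to `k` times its mass. -/
lemma sum_marginals_eq {U : Type*} [Fintype U] [DecidableEq U] {k : ℕ} {ρ : Finset U → ℝ}
    (hsupp : ∀ S, ρ S ≠ 0 → S.card = k) :
    ∑ i : U, ∑ S ∈ univ.filter (fun S : Finset U => i ∈ S), ρ S = k * ∑ S, ρ S := by
  simp only [sum_filter]
  rw [sum_comm, mul_sum]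
  refine sum_congr rfl fun S _ => ?_
  rw [← sum_filter, sum_const, nsmul_eq_mul, filter_univ_mem]
  by_cases h : ρ S = 0
  · simp [h]
  · rw [hsupp S h]

set_option maxHeartbeats 1000000 in
/-- Single-step moment (submartingale) bound controlling the acceptance
probability of batched rejection sampling, for an entropically independent distribution
`ν` on `binom(U,k)` with bounded marginals:
`∑_{i∈R∖T} ν_{t+1|T}(i)·(k·ν_{t+1|T}(i)/p_i)^γ ≤ exp(τ)`. -/
theorem single_step_moment_bound (U : Type*) [Fintype U] [DecidableEq U]
    (m k : ℕ) (hm : Fintype.card U = m) (hk : 0 < k)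
    (α : ℝ) (hα : α ∈ Set.Ioc (0 : ℝ) 1)
    (ν : Finset U → ℝ)
    (hnn : ∀ S, 0 ≤ ν S) (hsupp : ∀ S, ν S ≠ 0 → S.card = k)
    (hsum : ∑ S, ν S = 1)
    -- ν is (1/α)-entropically independent
    (hEI : ∀ ρ : Finset U → ℝ, (∀ S, 0 ≤ ρ S) → (∀ S, ρ S ≠ 0 → S.card = k) →
      (∑ S, ρ S = 1) → (∀ S, ν S = 0 → ρ S = 0) →
      ∑ i : U,
          ((∑ S ∈ univ.filter (fun S : Finset U => i ∈ S), ρ S) / k) *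
            Real.log (((∑ S ∈ univ.filter (fun S : Finset U => i ∈ S), ρ S) / k) /
              ((∑ S ∈ univ.filter (fun S : Finset U => i ∈ S), ν S) / k)) ≤
        1 / (α * k) * ∑ S, ρ S * Real.log (ρ S / ν S))
    (p : U → ℝ)
    (hp : ∀ i, p i = ∑ S ∈ univ.filter (fun S : Finset U => i ∈ S), ν S)
    (β : ℝ) (hβ : β ∈ Set.Ioo (0 : ℝ) 1)
    (C : ℝ) (hC : C = 1 + Real.sqrt β)
    (R : Finset U)
    (hub : ∀ i : U, p i ≤ C * k / m)
    (hlb : ∀ i ∈ R, (k : ℝ) / (C * m) ≤ p i)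
    (ε : ℝ) (hε : ε ∈ Set.Ioc (0 : ℝ) (Real.exp 1)⁻¹)
    (t : ℕ) (ht1 : 1 ≤ t) (ht2 : 2 * t ≤ k)
    (T : Finset U) (hT : T.card = t)
    (hνt : ε ^ t ≤ ((k.choose t : ℝ))⁻¹ *
      ∑ S ∈ univ.filter (fun S : Finset U => T ⊆ S), ν S)
    (γ : ℝ) (hγ : 0 < γ)
    (hβγ : Real.sqrt β ≤ min (1 / (3 * γ)) ((t / (α * k)) * Real.log (1 / ε)))
    (τ : ℝ)
    (hτ : (m : ℝ) ^ γ * (γ * (1 + γ)) * (12 * t / (α * k)) * Real.log (1 / ε) ≤ τ)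
    -- conditional marginal distribution ν_{t+1|T}
    (q : U → ℝ)
    (hq : ∀ i, q i =
      (∑ S ∈ univ.filter (fun S : Finset U => T ⊆ S ∧ i ∈ S), ν S) /
        (∑ S ∈ univ.filter (fun S : Finset U => T ⊆ S), ν S) / ((k : ℝ) - t)) :
    ∑ i ∈ R \ T, q i * ((k : ℝ) * q i / p i) ^ γ ≤ Real.exp τ := by
  obtain ⟨hα0, hα1⟩ := hα
  obtain ⟨hε0, hε1⟩ := hε
  set P := ∑ S ∈ univ.filter (fun S : Finset U => T ⊆ S), ν S with hP
  have hk0 : (0 : ℝ) < k := by exact_mod_cast hk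
  have ht0 : (1 : ℝ) ≤ t := by exact_mod_cast ht1
  have htk : (2 : ℝ) * t ≤ k := by exact_mod_cast ht2
  have hkt : (0 : ℝ) < k - t := by linarith
  have hm1 : 1 ≤ m := by
    have h := card_le_univ T
    omega
  have hm0 : (0 : ℝ) < m := by exact_mod_cast hm1
  have hs0 : 0 ≤ Real.sqrt β := Real.sqrt_nonneg β
  have hC1 : 1 ≤ C := by linarith
  have hC0 : 0 < C := by linarith
  have hεP : ε ^ t ≤ P := by
    have hch : (1 : ℝ) ≤ k.choose t := by exact_mod_cast Nat.choose_pos (by omega : t ≤ k)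
    have hP0 : 0 ≤ P := sum_nonneg fun S _ => hnn S
    exact hνt.trans (mul_le_of_le_one_left hP0 (inv_le_one_of_one_le₀ hch))
  have hP0 : 0 < P := (pow_pos hε0 t).trans_le hεP
  have hL1 : 1 ≤ Real.log (1 / ε) := by
    rw [one_div, Real.log_inv, le_neg, Real.log_le_iff_le_exp hε0, Real.exp_neg]
    exact hε1
  have hLP : Real.log (1 / P) ≤ t * Real.log (1 / ε) := by
    have h := Real.log_le_log (pow_pos hε0 t) hεP
    rw [Real.log_pow] at h
    simp only [one_div, Real.log_inv]
    linarith
  set A := (t / (α * k)) * Real.log (1 / ε) with hA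
  have hβA : Real.sqrt β ≤ A := hβγ.trans (min_le_right _ _)
  have htA : t / k ≤ A := by
    have h : (t : ℝ) / k ≤ t / (α * k) :=
      div_le_div_of_nonneg_left (by linarith) (by positivity) (by nlinarith)
    exact h.trans (le_mul_of_one_le_right (by positivity) hL1)
  have hA0 : 0 ≤ A := hs0.trans hβA
  -- the conditional distribution
  set ρ : Finset U → ℝ := fun S => if T ⊆ S then ν S / P else 0 with hρ
  have hρ0 : ∀ S, 0 ≤ ρ S := by
    intro S
    simp only [hρ]
    split_ifs
    · exact div_nonneg (hnn S) hP0.le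
    · exact le_rfl
  have hρν : ∀ S, ν S = 0 → ρ S = 0 := by
    intro S h
    simp [hρ, h]
  have hρsupp : ∀ S, ρ S ≠ 0 → S.card = k := fun S h => hsupp S fun h' => h (hρν S h')
  have hρsum : ∑ S, ρ S = 1 := by
    simp only [hρ]
    rw [← sum_filter, ← sum_div, ← hP, div_self hP0.ne']
  have hKL : ∑ S, ρ S * Real.log (ρ S / ν S) = Real.log (1 / P) := by
    trans ∑ S, ρ S * Real.log (1 / P)
    swap
    · rw [← sum_mul, hρsum, one_mul]
    refine sum_congr rfl fun S _ => ?_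
    by_cases h : ρ S = 0
    · simp [h]
    · have hν : ν S ≠ 0 := fun h' => h (hρν S h')
      have hTS : T ⊆ S := by
        by_contra h'
        exact h (by simp [hρ, h'])
      congr 2
      simp only [hρ, if_pos hTS]
      field_simp
  have hmarg : ∀ i, ∑ S ∈ univ.filter (fun S : Finset U => i ∈ S), ρ S = (k - t) * q i := by
    intro i
    rw [hq i, mul_div_cancel₀ _ hkt.ne', sum_div, sum_filter, sum_filter]
    refine sum_congr rfl fun S _ => ?_
    by_cases h1 : T ⊆ S <;> by_cases h2 : i ∈ S <;> simp [hρ, h1, h2]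
  have hq0 : ∀ i, 0 ≤ q i := by
    intro i
    have h : 0 ≤ (k - t) * q i := hmarg i ▸ sum_nonneg fun S _ => hρ0 S
    exact nonneg_of_mul_nonneg_right h hkt
  have hqT : ∀ i ∈ T, (k - t) * q i = 1 := by
    intro i hi
    rw [← hmarg i, ← hρsum, sum_filter]
    refine sum_congr rfl fun S _ => ?_
    by_cases h2 : i ∈ S
    · simp [h2]
    · have h1 : ¬ T ⊆ S := fun h => h2 (h hi)
      simp [hρ, h1]
  have hqsum : ∑ i ∈ Tᶜ, q i = 1 := by
    have h := sum_marginals_eq hρsupp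
    simp only [hmarg] at h
    rw [hρsum, ← sum_add_sum_compl T, sum_congr rfl hqT, ← mul_sum] at h
    simp only [sum_const, nsmul_eq_mul, mul_one, hT] at h
    refine mul_left_cancel₀ hkt.ne' ?_
    linarith
  have hpos : ∀ i, q i ≠ 0 → 0 < p i := by
    intro i hi
    rw [hp i]
    refine lt_of_le_of_ne (sum_nonneg fun S _ => hnn S) fun h => hi ?_
    have h0 := (sum_eq_zero_iff_of_nonneg fun S _ => hnn S).1 h.symm
    have h1 := hmarg i
    rw [sum_eq_zero fun S hS => hρν S (h0 S hS)] at h1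
    exact (mul_eq_zero.1 h1.symm).resolve_left hkt.ne'
  have hp1 : ∀ i, p i ≤ 1 := by
    intro i
    rw [hp i, ← hsum]
    exact sum_le_sum_of_subset_of_nonneg (filter_subset _ _) fun S _ _ => hnn S
  -- the entropy of the conditional marginals relative to the uniform distribution
  have hent := hEI ρ hρ0 hρsupp hρsum hρν
  rw [hKL] at hent
  simp only [hmarg, ← hp, div_div_div_cancel_right₀ hk0.ne'] at hent
  rw [← sum_add_sum_compl T] at hent
  have hTnn : 0 ≤ ∑ i ∈ T, (k - t) * q i / k * Real.log ((k - t) * q i / p i) := by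
    refine sum_nonneg fun i hi => ?_
    have hpi : 0 < p i := hpos i fun h => by simpa [h] using hqT i hi
    rw [hqT i hi]
    exact mul_nonneg (by positivity) (Real.log_nonneg ((one_le_div hpi).2 (hp1 i)))
  have hlogC : Real.log C ≤ Real.sqrt β := by
    have h := Real.log_le_sub_one_of_pos hC0
    linarith
  have hlogk : Real.log (k / (k - t)) ≤ 2 * A := by
    have h := Real.log_le_sub_one_of_pos (div_pos hk0 hkt)
    have h2 : (k : ℝ) / (k - t) - 1 ≤ 2 * (t / k) := by
      rw [div_sub_one hkt.ne', div_le_iff₀ hkt, mul_assoc, div_mul_eq_mul_div,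
        mul_div_assoc', le_div_iff₀ hk0]
      nlinarith
    linarith
  have hlow : ∀ i ∈ Tᶜ, (k - t) / k * (q i * Real.log (m * q i) - 3 * A * q i) ≤
      (k - t) * q i / k * Real.log ((k - t) * q i / p i) := by
    intro i _
    rcases (hq0 i).eq_or_lt with h | h
    · simp [← h]
    · have hpi := hpos i h.ne'
      have hle : m * q i / (C * (k / (k - t))) ≤ (k - t) * q i / p i := by
        have h2 := hub i
        rw [le_div_iff₀ hm0] at h2
        rw [div_le_div_iff₀ (by positivity) hpi]
        field_simp
        linarith
      have hlog := Real.log_le_log (by positivity) hle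
      rw [Real.log_div (by positivity) (by positivity),
        Real.log_mul hC0.ne' (by positivity)] at hlog
      calc _ = (k - t) * q i / k * (Real.log (m * q i) - 3 * A) := by ring
        _ ≤ _ := mul_le_mul_of_nonneg_left (by linarith) (by positivity)
  have hlowsum := sum_le_sum hlow
  rw [← mul_sum, sum_sub_distrib, ← mul_sum, hqsum] at hlowsum
  have hD : ∑ i ∈ Tᶜ, q i * Real.log (m * q i) ≤ 5 * A := by
    have hAle : 1 / (α * k) * Real.log (1 / P) ≤ A := by
      calc _ ≤ 1 / (α * k) * (t * Real.log (1 / ε)) :=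
            mul_le_mul_of_nonneg_left hLP (by positivity)
        _ = A := by rw [hA]; ring
    have h1 : (k - t) / k * (∑ i ∈ Tᶜ, q i * Real.log (m * q i) - 3 * A * 1) ≤ A := by
      linarith
    rw [div_mul_eq_mul_div, div_le_iff₀ hk0] at h1
    by_contra! h2
    nlinarith [mul_nonneg hA0 (by linarith : (0 : ℝ) ≤ k - 2 * t)]
  -- the moment bound
  have hmom := sum_mul_rpow_le_entropy hm1 (hm ▸ card_le_univ Tᶜ) hγ (fun i _ => hq0 i) hqsum
  set K := γ * (1 + γ) * (m : ℝ) ^ γ with hK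
  have hmγ : 1 ≤ (m : ℝ) ^ γ := Real.one_le_rpow (by exact_mod_cast hm1) hγ.le
  have hKγ : γ ≤ K := by
    have h : γ * 1 ≤ γ * (1 + γ) := mul_le_mul_of_nonneg_left (by linarith) hγ.le
    have h2 : γ * (1 + γ) ≤ K := le_mul_of_one_le_right (by positivity) hmγ
    linarith
  have hK0 : 0 ≤ K := hγ.le.trans hKγ
  have hstep : ∀ i ∈ R \ T, q i * (k * q i / p i) ^ γ ≤ C ^ γ * (q i * (m * q i) ^ γ) := by
    intro i hi
    have hR := hlb i (mem_sdiff.1 hi).1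
    have hpi : 0 < p i := lt_of_lt_of_le (by positivity) hR
    have hqi := hq0 i
    have hx : k * q i / p i ≤ C * (m * q i) := by
      rw [div_le_iff₀ (by positivity)] at hR
      rw [div_le_iff₀ hpi]
      linarith [mul_le_mul_of_nonneg_right hR hqi]
    have h := Real.rpow_le_rpow (by positivity) hx hγ.le
    rw [Real.mul_rpow hC0.le (by positivity)] at h
    calc _ ≤ q i * (C ^ γ * (m * q i) ^ γ) := mul_le_mul_of_nonneg_left h hqi
      _ = _ := by ring
  have hCγ : C ^ γ ≤ Real.exp (A * K) := by
    rw [Real.rpow_def_of_pos hC0]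
    refine Real.exp_le_exp.2 ?_
    exact mul_le_mul (hlogC.trans hβA) hKγ hγ.le hA0
  calc ∑ i ∈ R \ T, q i * (k * q i / p i) ^ γ
      ≤ ∑ i ∈ R \ T, C ^ γ * (q i * (m * q i) ^ γ) := sum_le_sum hstep
    _ ≤ ∑ i ∈ Tᶜ, C ^ γ * (q i * (m * q i) ^ γ) := by
        refine sum_le_sum_of_subset_of_nonneg (fun i hi => ?_) fun i _ _ => ?_
        · exact mem_compl.2 (mem_sdiff.1 hi).2
        · have hqi := hq0 i
          positivity
    _ = C ^ γ * ∑ i ∈ Tᶜ, q i * (m * q i) ^ γ := by rw [mul_sum]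
    _ ≤ Real.exp (A * K) * Real.exp (K * (5 * A)) := by
        refine mul_le_mul hCγ ?_ (sum_nonneg fun i _ => ?_) (Real.exp_pos _).le
        · have h := Real.add_one_le_exp (K * (5 * A))
          have h2 := mul_le_mul_of_nonneg_left hD hK0
          linarith
        · have hqi := hq0 i
          positivity
    _ ≤ Real.exp τ := by
        rw [← Real.exp_add, Real.exp_le_exp]
        refine le_trans ?_ hτ
        have h : (m : ℝ) ^ γ * (γ * (1 + γ)) * (12 * t / (α * k)) * Real.log (1 / ε)
            = 12 * (K * A) := by
          rw [hK, hA]; ring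
        rw [h]
        nlinarith [mul_nonneg hK0 hA0]
end

section
/- Let K be an n×n real symmetric matrix with 0 ⪯ K ⪯ λI for some λ ∈ [0,1), and let L = K(I−K)^{−1}. Define μ(T) = det(L_{T,T})/det(I+L) for T ⊆ [n] (with det of the empty matrix 1), the DPP with ensemble matrix L, and define ν(T) = ∏_{i∈T} K_{ii} · ∏_{i∉T} (1−K_{ii}), the product-Bernoulli distribution with success probabilities K_{ii}. Then for every T ⊆ [n], μ(T) ≤ (1−λ)^{−|T|}·ν(T). -/
open Finset Matrix

open scoped MatrixOrder in
/-- The product of two commuting positive semidefinite real matrices is positive semidefinite. -/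
theorem Matrix.PosSemidef.mul_of_commute {ι : Type*} [Fintype ι] [DecidableEq ι]
    {A B : Matrix ι ι ℝ} (hA : A.PosSemidef) (hB : B.PosSemidef) (h : Commute A B) :
    (A * B).PosSemidef :=
  Matrix.nonneg_iff_posSemidef.mp (h.mul_nonneg hA.nonneg hB.nonneg)

/-- A positive semidefinite matrix with unit diagonal has determinant at most one. -/
theorem Matrix.PosSemidef.det_le_one_of_diag_eq_one {ι : Type*} [Fintype ι] [DecidableEq ι]
    {A : Matrix ι ι ℝ} (hA : A.PosSemidef) (hdiag : ∀ i, A i i = 1) : A.det ≤ 1 := by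
  have htr : ∑ i, hA.1.eigenvalues i = ∑ _i : ι, (1 : ℝ) := by
    have h := hA.1.trace_eq_sum_eigenvalues
    simp only [Matrix.trace, Matrix.diag_apply, hdiag, RCLike.ofReal_real_eq_id, id] at h
    exact h.symm
  calc A.det = ∏ i, hA.1.eigenvalues i := by
        simpa using hA.1.det_eq_prod_eigenvalues
    _ ≤ ∏ i, Real.exp (hA.1.eigenvalues i - 1) :=
        Finset.prod_le_prod (fun i _ => hA.eigenvalues_nonneg i) fun i _ => by
          linarith [Real.add_one_le_exp (hA.1.eigenvalues i - 1)]
    _ = 1 := by rw [← Real.exp_sum, Finset.sum_sub_distrib, htr, sub_self, Real.exp_zero]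

/-- **Hadamard's inequality** for positive semidefinite real matrices. -/
theorem Matrix.PosSemidef.det_le_prod_diag {ι : Type*} [Fintype ι] [DecidableEq ι]
    {A : Matrix ι ι ℝ} (hA : A.PosSemidef) : A.det ≤ ∏ i, A i i := by
  by_cases hpos : ∀ i, 0 < A i i
  · let D : Matrix ι ι ℝ := Matrix.diagonal fun i => (√(A i i))⁻¹
    have hB : (D * A * D).PosSemidef := by
      simpa [D, Matrix.diagonal_conjTranspose] using hA.mul_mul_conjTranspose_same D
    have hdet : (D * A * D).det = A.det / ∏ i, A i i := by
      have hsq : D.det * D.det = (∏ i, A i i)⁻¹ := by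
        rw [Matrix.det_diagonal, ← Finset.prod_mul_distrib, ← Finset.prod_inv_distrib]
        refine Finset.prod_congr rfl fun i _ => ?_
        rw [← mul_inv, Real.mul_self_sqrt (hpos i).le]
      rw [Matrix.det_mul, Matrix.det_mul, mul_right_comm, hsq, div_eq_mul_inv, mul_comm]
    have hle := hB.det_le_one_of_diag_eq_one fun i => by
      have hs : √(A i i) ≠ 0 := (Real.sqrt_pos.mpr (hpos i)).ne'
      simp only [D, Matrix.mul_diagonal, Matrix.diagonal_mul]
      field_simp
      exact (Real.sq_sqrt (hpos i).le).symm
    rwa [hdet, div_le_one (Finset.prod_pos fun i _ => hpos i)] at hle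
  · obtain ⟨i, hi⟩ := not_forall.mp hpos
    have hi0 : A i i = 0 := le_antisymm (not_lt.mp hi) hA.diag_nonneg
    have hker : A *ᵥ Pi.single i 1 = 0 :=
      (hA.dotProduct_mulVec_zero_iff _).mp (by simp [hi0])
    have hdet : A.det = 0 :=
      Matrix.exists_mulVec_eq_zero_iff.mp ⟨Pi.single i 1, by simp, hker⟩
    exact hdet.le.trans (Finset.prod_nonneg fun j _ => hA.diag_nonneg)

/-- Rejection-sampling ratio bound for a spectrally bounded symmetric DPP
against its product-Bernoulli proposal: with `0 ⪯ K ⪯ λI`, `λ < 1`, `L = K(I−K)⁻¹`,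
`μ(T) = det(L_{T,T})/det(I+L)` and `ν(T) = ∏_{i∈T} K_{ii} · ∏_{i∉T}(1−K_{ii})`, we have
`μ(T) ≤ (1−λ)^{−|T|}·ν(T)` for every `T ⊆ [n]`. -/
theorem dpp_bernoulli_rejection_ratio_bound (n : ℕ)
    (K : Matrix (Fin n) (Fin n) ℝ)
    (lam : ℝ) (hlam : lam ∈ Set.Ico (0 : ℝ) 1)
    (hK0 : K.PosSemidef)
    (hKlam : ((lam • (1 : Matrix (Fin n) (Fin n) ℝ)) - K).PosSemidef)
    (L : Matrix (Fin n) (Fin n) ℝ) (hL : L = K * (1 - K)⁻¹)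
    (μ ν : Finset (Fin n) → ℝ)
    (hμ : ∀ T : Finset (Fin n), μ T =
      (L.submatrix (fun i : {x // x ∈ T} => (i : Fin n))
        (fun j : {x // x ∈ T} => (j : Fin n))).det / (1 + L).det)
    (hν : ∀ T : Finset (Fin n), ν T =
      (∏ i ∈ T, K i i) * ∏ i ∈ Tᶜ, (1 - K i i)) :
    ∀ T : Finset (Fin n), μ T ≤ (1 - lam)⁻¹ ^ T.card * ν T := by
  obtain ⟨hlam0, hlam1⟩ := hlam
  have hc : 0 < 1 - lam := sub_pos.mpr hlam1
  have hK1 : (1 - K).PosDef := by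
    have h : 1 - K = (1 - lam) • (1 : Matrix (Fin n) (Fin n) ℝ) + (lam • 1 - K) := by
      rw [sub_smul, one_smul]; abel
    rw [h]
    exact (Matrix.PosDef.one.smul hc).add_posSemidef hKlam
  have hunit : IsUnit (1 - K).det := hK1.det_pos.ne'.isUnit
  have hcomm : Commute K (1 - K)⁻¹ := by
    have h : Commute (1 - K) (1 - K)⁻¹ :=
      (Matrix.mul_nonsing_inv _ hunit).trans (Matrix.nonsing_inv_mul _ hunit).symm
    simpa using (Commute.one_left (1 - K)⁻¹).sub_left h
  have hLpsd : L.PosSemidef := hL ▸ hK0.mul_of_commute hK1.inv.posSemidef hcomm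
  have hdet : (1 + L).det = ((1 - K).det)⁻¹ := by
    have h : 1 + L = (1 - K)⁻¹ := by
      calc 1 + L = (1 - K) * (1 - K)⁻¹ + K * (1 - K)⁻¹ := by
            rw [Matrix.mul_nonsing_inv _ hunit, hL]
        _ = (1 - K)⁻¹ := by rw [← add_mul, sub_add_cancel, one_mul]
    rw [h, Matrix.det_nonsing_inv, Ring.inverse_eq_inv']
  have hLdiag : ∀ i, L i i ≤ (1 - lam)⁻¹ * K i i := fun i => by
    have hpsd : (K * (lam • 1 - K) * (1 - K)⁻¹).PosSemidef := by
      have hKK : Commute K (lam • 1 - K) :=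
        ((Commute.one_right K).smul_right lam).sub_right (Commute.refl K)
      refine (hK0.mul_of_commute hKlam hKK).mul_of_commute hK1.inv.posSemidef ?_
      exact hcomm.mul_left (((Commute.one_left _).smul_left lam).sub_left hcomm)
    have heq : K * (lam • 1 - K) * (1 - K)⁻¹ = K - (1 - lam) • L := by
      have h : lam • 1 - K = (1 - K) - (1 - lam) • (1 : Matrix (Fin n) (Fin n) ℝ) := by
        rw [sub_smul, one_smul]; abel
      rw [h, mul_assoc, sub_mul, Matrix.mul_nonsing_inv _ hunit, mul_sub, mul_one, hL,
        smul_mul_assoc, one_mul, mul_smul_comm]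
    have hnn := hpsd.diag_nonneg (i := i)
    rw [heq] at hnn
    simp only [Matrix.sub_apply, Matrix.smul_apply, smul_eq_mul] at hnn
    rw [inv_mul_eq_div, le_div_iff₀ hc]
    linarith
  have hKdiag : ∀ i, 0 ≤ 1 - K i i := fun i => by
    simpa using hK1.posSemidef.diag_nonneg (i := i)
  intro T
  have hdetT : (L.submatrix (fun i : {x // x ∈ T} => (i : Fin n))
      (fun j : {x // x ∈ T} => (j : Fin n))).det ≤ (1 - lam)⁻¹ ^ T.card * ∏ i ∈ T, K i i := by
    calc _ ≤ ∏ i : {x // x ∈ T}, L i i := (hLpsd.submatrix _).det_le_prod_diag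
      _ = ∏ i ∈ T, L i i := Finset.prod_coe_sort T fun i => L i i
      _ ≤ ∏ i ∈ T, (1 - lam)⁻¹ * K i i :=
          Finset.prod_le_prod (fun i _ => hLpsd.diag_nonneg) fun i _ => hLdiag i
      _ = _ := by rw [Finset.prod_mul_distrib, Finset.prod_const]
  have hdetK : (1 - K).det ≤ ∏ i ∈ Tᶜ, (1 - K i i) := by
    calc (1 - K).det ≤ ∏ i, (1 - K i i) := by
          simpa using hK1.posSemidef.det_le_prod_diag
      _ = (∏ i ∈ T, (1 - K i i)) * ∏ i ∈ Tᶜ, (1 - K i i) :=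
          (Finset.prod_mul_prod_compl T _).symm
      _ ≤ _ := mul_le_of_le_one_left (Finset.prod_nonneg fun i _ => hKdiag i)
          (Finset.prod_le_one (fun i _ => hKdiag i) fun i _ =>
            sub_le_self 1 hK0.diag_nonneg)
  rw [hμ, hν, hdet, div_inv_eq_mul, ← mul_assoc]
  exact mul_le_mul hdetT hdetK hK1.det_pos.le
    (mul_nonneg (pow_nonneg (inv_nonneg.mpr hc.le) _)
      (Finset.prod_nonneg fun i _ => hK0.diag_nonneg))
end
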